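/- Let b₁, b₂ ∈ ℝ, and let v₂, V₂, u₁, u₂, V, Ṽ, U₁, Ũ₁, U₂, Ũ₂ be smooth complex-valued functions on ℝ² (coordinates (X,Y)) satisfying: ∂_XV₂ = ∂_Yv₂; u₂ = ∂_Xv₂ + V₂ − v₂²; u₁ = −∂_Xv₂ + V₂ − v₂²; ∂_XṼ = ∂_YV; ∂_XŨ₁ = ∂_YU₁; ∂_XŨ₂ = ∂_YU₂; U₁ = −∂_XV + Ṽ − 2v₂V; U₂ = ∂_XV + Ṽ − 2v₂V; 3(∂_XU₁ + Ũ₁ + 2v₂U₁) + 4(∂_X²V + 3v₂∂_XV − b₁V + 3v₂²V + (3/2)u₂V) − 4b₂Ṽ = 0; and 3(−∂_XU₂ + Ũ₂ + 2v₂U₂) + 4(∂_X²V − 3v₂∂_XV − b₁V + 3v₂²V + (3/2)u₁V) − 4b₂Ṽ = 0. If U₂ satisfies 3∂_Y²U₂ − 4b₂∂_X∂_YU₂ + ∂_X²(∂_X²U₂ − 4b₁U₂ + 6u₂U₂) = 0, then U₁ satisfies 3∂_Y²U₁ − 4b₂∂_X∂_YU₁ + ∂_X²(∂_X²U₁ −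 4b₁U₁ + 6u₁U₁) = 0. -/

import Mathlib

noncomputable def pX {E : Type*} [NormedAddCommGroup E] [NormedSpace ℝ E]
    (f : ℝ → ℝ → E) : ℝ → ℝ → E :=
  fun x y => deriv (fun s => f s y) x

noncomputable def pY {E : Type*} [NormedAddCommGroup E] [NormedSpace ℝ E]
    (f : ℝ → ℝ → E) : ℝ → ℝ → E :=
  fun x y => deriv (fun s => f x s) y

/-!
The statement is an identity between differential operators, valid in every commutative algebra
with two commuting derivations `∂X` and `∂Y`. The linearized Miura transforms differ by
`U₂ - U₁ = 2 ∂X V`, and substituting them into the linearized KP-II operators `L(u₁)` and `L(u₂)`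
gives `L(u₁) U₁ = L(u₂) U₂ - 2 ∂X² N V`, where `N` is the linearized modified KP-II operator at
`v₂`. The left-hand side `B` of the first Bäcklund equation is an integrated form of this
operator, `∂X B = N V`, so `L(u₁) U₁ = L(u₂) U₂` whenever `B = 0`.
-/

section DifferentialAlgebra

variable {𝕜 R : Type*} [CommRing 𝕜] [CommRing R] [Algebra 𝕜 R]

/-- The Miura transform of `v`, with `w` standing for `∂X⁻¹ ∂Y v`; `M₊` and `M₋` are the cases
`D = ∂X` and `D = -∂X`. -/
def miura (D : Derivation 𝕜 R R) (v w : R) : R :=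
  D v + w - v ^ 2

/-- The linearization of `miura D` at `v`, with `W` standing for `∂X⁻¹ ∂Y V`. -/
def linearizedMiura (D : Derivation 𝕜 R R) (v V W : R) : R :=
  D V + W - 2 * v * V

/-- The operator `∂X² - 4 b + 6 u` of the linearized KdV equation; `∂X²` of it is the part of the
linearized KP-II operator that does not involve `∂Y`. -/
def linearizedKdV (DX : Derivation 𝕜 R R) (b : 𝕜) (u U : R) : R :=
  DX (DX U) - (4 * b) • U + 6 * u * U

/-- The KP-II operator linearized around `u`, in the frame moving with speeds `(b₁, b₂)` and after
one differentiation in `X`, which removes the nonlocal term `∂X⁻¹ ∂Y² U`. -/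
def linearizedKP (DX DY : Derivation 𝕜 R R) (b₁ b₂ : 𝕜) (u U : R) : R :=
  3 * DY (DY U) - (4 * b₂) • DX (DY U) + DX (DX (linearizedKdV DX b₁ u U))

/-- The modified KP-II operator linearized around `v`, in the frame moving with speeds `(b₁, b₂)`;
`w` and `W` stand for `∂X⁻¹ ∂Y v` and `∂X⁻¹ ∂Y V`. -/
def linearizedModifiedKP (DX DY : Derivation 𝕜 R R) (b₁ b₂ : 𝕜) (v w V W : R) : R :=
  3 * DY W - (4 * b₂) • DY V + DX (DX (DX V)) - (4 * b₁) • DX V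
    + 6 * ((w - v ^ 2) * DX V + DX v * (W - 2 * v * V))

/-- The linearized time part of the Bäcklund transformation at `u = miura D v` and
`U = linearizedMiura (-D) v V W`; `W` and `T` stand for `∂X⁻¹ ∂Y V` and `∂X⁻¹ ∂Y U`. The two
equations of the paper are the cases `D = ∂X` and `D = -∂X`. -/
def linearizedBacklund (D : Derivation 𝕜 R R) (b₁ b₂ : 𝕜) (v u V W U T : R) : R :=
  3 * (D U + T + 2 * v * U)
    + 4 * (D (D V) + 3 * v * D V - b₁ • V + 3 * v ^ 2 * V) + 6 * u * V - (4 * b₂) • W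

variable {DX DY : Derivation 𝕜 R R} (b₁ b₂ : 𝕜) {v w V W T : R}

theorem derivation_ofNat_mul (D : Derivation 𝕜 R R) (n : ℕ) [n.AtLeastTwo] (f : R) :
    D (ofNat(n) * f) = ofNat(n) * D f := by
  rw [← Nat.cast_ofNat, D.leibniz, D.map_natCast, smul_zero, add_zero, smul_eq_mul]

theorem linearizedMiura_neg (D : Derivation 𝕜 R R) :
    linearizedMiura (-D) v V W = linearizedMiura D v V W - 2 * D V := by
  simp only [linearizedMiura, Derivation.neg_apply]
  ring

theorem linearizedKdV_miura_neg :
    linearizedKdV DX b₁ (miura (-DX) v w) (linearizedMiura (-DX) v V W) =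
      linearizedKdV DX b₁ (miura DX v w) (linearizedMiura DX v V W)
        + 6 * DY W - (8 * b₂) • DY V - 2 * linearizedModifiedKP DX DY b₁ b₂ v w V W := by
  simp only [linearizedKdV, linearizedMiura_neg, map_sub, derivation_ofNat_mul]
  simp only [linearizedModifiedKP, miura, linearizedMiura, Derivation.neg_apply, Algebra.smul_def,
    map_mul, map_ofNat]
  ring

theorem linearizedKP_miura_neg (hcomm : ∀ f, DX (DY f) = DY (DX f)) (hW : DX W = DY V) :
    linearizedKP DX DY b₁ b₂ (miura (-DX) v w) (linearizedMiura (-DX) v V W) =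
      linearizedKP DX DY b₁ b₂ (miura DX v w) (linearizedMiura DX v V W)
        - 2 * DX (DX (linearizedModifiedKP DX DY b₁ b₂ v w V W)) := by
  rw [linearizedKP, linearizedKdV_miura_neg (DY := DY) b₁ b₂, linearizedMiura_neg, linearizedKP]
  simp only [map_add, map_sub, derivation_ofNat_mul, Derivation.map_smul, hcomm, hW]
  simp only [Algebra.smul_def, map_mul, map_ofNat]
  ring

theorem derivation_linearizedBacklund (hcomm : ∀ f, DX (DY f) = DY (DX f)) (hw : DX w = DY v)
    (hW : DX W = DY V) (hT : DX T = DY (linearizedMiura (-DX) v V W)) :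
    DX (linearizedBacklund DX b₁ b₂ v (miura DX v w) V W (linearizedMiura (-DX) v V W) T) =
      linearizedModifiedKP DX DY b₁ b₂ v w V W := by
  have hU : DX (linearizedMiura (-DX) v V W) = DY V - DX (DX V) - 2 * (v * DX V + V * DX v) := by
    simp only [linearizedMiura, Derivation.neg_apply, mul_assoc, map_add, map_sub, map_neg,
      derivation_ofNat_mul, Derivation.leibniz, smul_eq_mul, hW]
    ring
  have hB : linearizedBacklund DX b₁ b₂ v (miura DX v w) V W (linearizedMiura (-DX) v V W) T =
      DX (DX V) + 3 * (DY V + T + 2 * (v * W)) + 6 * ((w - v * v) * V)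
        - (4 * b₁) • V - (4 * b₂) • W := by
    rw [linearizedBacklund, hU]
    simp only [miura, linearizedMiura, Derivation.neg_apply, Algebra.smul_def, map_mul, map_ofNat]
    ring
  rw [hB]
  simp only [linearizedModifiedKP, map_add, map_sub, derivation_ofNat_mul, Derivation.map_smul,
    Derivation.leibniz, smul_eq_mul, hw, hW, hT, linearizedMiura, Derivation.neg_apply, map_neg,
    mul_assoc, hcomm]
  ring

theorem linearizedKP_miura_neg_eq_of_linearizedBacklund_eq_zero
    (hcomm : ∀ f, DX (DY f) = DY (DX f)) (hw : DX w = DY v)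
    (hW : DX W = DY V) (hT : DX T = DY (linearizedMiura (-DX) v V W))
    (hB : linearizedBacklund DX b₁ b₂ v (miura DX v w) V W (linearizedMiura (-DX) v V W) T = 0) :
    linearizedKP DX DY b₁ b₂ (miura (-DX) v w) (linearizedMiura (-DX) v V W) =
      linearizedKP DX DY b₁ b₂ (miura DX v w) (linearizedMiura DX v V W) := by
  rw [linearizedKP_miura_neg b₁ b₂ hcomm hW, ← derivation_linearizedBacklund b₁ b₂ hcomm hw hW hT,
    hB, map_zero, map_zero, map_zero, mul_zero, sub_zero]

end DifferentialAlgebra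

section PartialDerivatives

variable {E : Type*} [NormedAddCommGroup E] [NormedSpace ℝ E] {f : ℝ → ℝ → E} {m n : WithTop ℕ∞}

theorem pX_eq_fderiv {x y : ℝ} (hf : DifferentiableAt ℝ (fun p : ℝ × ℝ => f p.1 p.2) (x, y)) :
    pX f x y = fderiv ℝ (fun p : ℝ × ℝ => f p.1 p.2) (x, y) (1, 0) :=
  (hf.hasFDerivAt.comp_hasDerivAt (f := fun s => (s, y)) x
    ((hasDerivAt_id' x).prodMk (hasDerivAt_const x y))).deriv

theorem pY_eq_fderiv {x y : ℝ} (hf : DifferentiableAt ℝ (fun p : ℝ × ℝ => f p.1 p.2) (x, y)) :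
    pY f x y = fderiv ℝ (fun p : ℝ × ℝ => f p.1 p.2) (x, y) (0, 1) :=
  (hf.hasFDerivAt.comp_hasDerivAt (f := fun s => (x, s)) y
    ((hasDerivAt_const y x).prodMk (hasDerivAt_id' y))).deriv

theorem contDiff_pX (hf : ContDiff ℝ n fun p : ℝ × ℝ => f p.1 p.2) (hmn : m + 1 ≤ n) :
    ContDiff ℝ m fun p : ℝ × ℝ => pX f p.1 p.2 := by
  have hd := (hf.of_le (le_add_self.trans hmn)).differentiable one_ne_zero
  simpa only [fun p : ℝ × ℝ => pX_eq_fderiv (hd (p.1, p.2))] using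
    (hf.fderiv_right hmn).clm_apply contDiff_const

theorem contDiff_pY (hf : ContDiff ℝ n fun p : ℝ × ℝ => f p.1 p.2) (hmn : m + 1 ≤ n) :
    ContDiff ℝ m fun p : ℝ × ℝ => pY f p.1 p.2 := by
  have hd := (hf.of_le (le_add_self.trans hmn)).differentiable one_ne_zero
  simpa only [fun p : ℝ × ℝ => pY_eq_fderiv (hd (p.1, p.2))] using
    (hf.fderiv_right hmn).clm_apply contDiff_const

theorem pX_pY_comm (hf : ContDiff ℝ 2 fun p : ℝ × ℝ => f p.1 p.2) : pX (pY f) = pY (pX f) := by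
  funext x y
  have h11 : (1 : WithTop ℕ∞) + 1 ≤ 2 := one_add_one_eq_two.le
  have hd := hf.differentiable two_ne_zero
  have hd' := ((hf.fderiv_right h11).differentiable one_ne_zero (x, y)).hasFDerivAt
  rw [pX_eq_fderiv ((contDiff_pY hf h11).differentiable one_ne_zero (x, y)),
    pY_eq_fderiv ((contDiff_pX hf h11).differentiable one_ne_zero (x, y))]
  simp only [pX_eq_fderiv (hd _), pY_eq_fderiv (hd _)]
  rw [(hd'.clm_apply (hasFDerivAt_const ((0, 1) : ℝ × ℝ) (x, y))).fderiv,
    (hd'.clm_apply (hasFDerivAt_const ((1, 0) : ℝ × ℝ) (x, y))).fderiv]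
  simpa using (hf.contDiffAt.isSymmSndFDerivAt
    minSmoothness_of_isRCLikeNormedField.le).eq (1, 0) (0, 1)

end PartialDerivatives

section SmoothFunctions

variable {A : Type*} [NormedCommRing A] [NormedAlgebra ℝ A]

variable (A) in
/-- The algebra of jointly smooth functions of two real variables. They are kept in curried form so
that `pX` and `pY` act on them without a change of variables. -/
def smoothFunctions : Subalgebra A (ℝ → ℝ → A) where
  carrier := {f | ContDiff ℝ (⊤ : ℕ∞) fun p : ℝ × ℝ => f p.1 p.2}
  mul_mem' hf hg := hf.out.mul hg.out
  add_mem' hf hg := hf.out.add hg.out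
  algebraMap_mem' c := Set.mem_ofPred.2 (contDiff_const (c := c))

theorem mem_smoothFunctions {f : ℝ → ℝ → A} :
    f ∈ smoothFunctions A ↔ ContDiff ℝ (⊤ : ℕ∞) fun p : ℝ × ℝ => f p.1 p.2 :=
  Iff.rfl

namespace smoothFunctions

theorem differentiableAt_left (f : smoothFunctions A) (x y : ℝ) :
    DifferentiableAt ℝ (fun s => (f : ℝ → ℝ → A) s y) x :=
  ((mem_smoothFunctions.1 f.2).comp (contDiff_prodMk_left y)).differentiable (by simp) x

theorem differentiableAt_right (f : smoothFunctions A) (x y : ℝ) :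
    DifferentiableAt ℝ (fun s => (f : ℝ → ℝ → A) x s) y :=
  ((mem_smoothFunctions.1 f.2).comp (contDiff_prodMk_right x)).differentiable (by simp) y

variable (A) in
/-- `pX` as a derivation of the algebra of smooth functions. -/
noncomputable def derivationX : Derivation A (smoothFunctions A) (smoothFunctions A) :=
  Derivation.mk'
    { toFun f := ⟨pX f, mem_smoothFunctions.2 (contDiff_pX (mem_smoothFunctions.1 f.2) (by simp))⟩
      map_add' f g := Subtype.ext <| funext₂ fun x y =>
        deriv_fun_add (differentiableAt_left f x y) (differentiableAt_left g x y)
      map_smul' c f := Subtype.ext <| funext₂ fun x y =>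
        deriv_fun_const_smul c (differentiableAt_left f x y) }
    fun f g => Subtype.ext <| funext₂ fun x y =>
      (deriv_fun_mul (differentiableAt_left f x y) (differentiableAt_left g x y)).trans <| by
        rw [add_comm, mul_comm (deriv _ _)]
        rfl

variable (A) in
/-- `pY` as a derivation of the algebra of smooth functions. -/
noncomputable def derivationY : Derivation A (smoothFunctions A) (smoothFunctions A) :=
  Derivation.mk'
    { toFun f := ⟨pY f, mem_smoothFunctions.2 (contDiff_pY (mem_smoothFunctions.1 f.2) (by simp))⟩
      map_add' f g := Subtype.ext <| funext₂ fun x y =>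
        deriv_fun_add (differentiableAt_right f x y) (differentiableAt_right g x y)
      map_smul' c f := Subtype.ext <| funext₂ fun x y =>
        deriv_fun_const_smul c (differentiableAt_right f x y) }
    fun f g => Subtype.ext <| funext₂ fun x y =>
      (deriv_fun_mul (differentiableAt_right f x y) (differentiableAt_right g x y)).trans <| by
        rw [add_comm, mul_comm (deriv _ _)]
        rfl

theorem derivationX_derivationY_comm (f : smoothFunctions A) :
    derivationX A (derivationY A f) = derivationY A (derivationX A f) :=
  Subtype.ext (pX_pY_comm ((mem_smoothFunctions.1 f.2).of_le (WithTop.coe_le_coe.2 le_top)))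

end smoothFunctions

end SmoothFunctions

open smoothFunctions in
theorem linearized_miura_zero_eigenvalue_general
    {A : Type*} [NormedCommRing A] [NormedAlgebra ℝ A] (b₁ b₂ : A)
    {v₂ V₂ u₁ u₂ V Vt U₁ U₁t U₂ : ℝ → ℝ → A}
    (hv₂ : ContDiff ℝ (⊤ : ℕ∞) fun p : ℝ × ℝ => v₂ p.1 p.2)
    (hV₂ : ContDiff ℝ (⊤ : ℕ∞) fun p : ℝ × ℝ => V₂ p.1 p.2)
    (hV : ContDiff ℝ (⊤ : ℕ∞) fun p : ℝ × ℝ => V p.1 p.2)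
    (hVt : ContDiff ℝ (⊤ : ℕ∞) fun p : ℝ × ℝ => Vt p.1 p.2)
    (hU₁t : ContDiff ℝ (⊤ : ℕ∞) fun p : ℝ × ℝ => U₁t p.1 p.2)
    (hV₂x : ∀ X Y, pX V₂ X Y = pY v₂ X Y)
    (hu₂def : ∀ X Y, u₂ X Y = pX v₂ X Y + V₂ X Y - (v₂ X Y) ^ 2)
    (hu₁def : ∀ X Y, u₁ X Y = -pX v₂ X Y + V₂ X Y - (v₂ X Y) ^ 2)
    (hVtx : ∀ X Y, pX Vt X Y = pY V X Y)
    (hU₁tx : ∀ X Y, pX U₁t X Y = pY U₁ X Y)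
    (hU₁def : ∀ X Y, U₁ X Y = -pX V X Y + Vt X Y - 2 * v₂ X Y * V X Y)
    (hU₂def : ∀ X Y, U₂ X Y = pX V X Y + Vt X Y - 2 * v₂ X Y * V X Y)
    (hMt₁ : ∀ X Y,
      3 * (pX U₁ X Y + U₁t X Y + 2 * v₂ X Y * U₁ X Y)
        + 4 * (pX (pX V) X Y + 3 * v₂ X Y * pX V X Y - b₁ * V X Y + 3 * (v₂ X Y) ^ 2 * V X Y)
        + 6 * u₂ X Y * V X Y - 4 * b₂ * Vt X Y = 0) (X Y : ℝ) :
    3 * pY (pY U₁) X Y - 4 * b₂ * pX (pY U₁) X Y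
        + pX (pX fun a b => pX (pX U₁) a b - 4 * b₁ * U₁ a b + 6 * u₁ a b * U₁ a b) X Y =
      3 * pY (pY U₂) X Y - 4 * b₂ * pX (pY U₂) X Y
        + pX (pX fun a b => pX (pX U₂) a b - 4 * b₁ * U₂ a b + 6 * u₂ a b * U₂ a b) X Y := by
  lift v₂ to smoothFunctions A using hv₂
  lift V₂ to smoothFunctions A using hV₂
  lift V to smoothFunctions A using hV
  lift Vt to smoothFunctions A using hVt
  lift U₁t to smoothFunctions A using hU₁t
  obtain rfl : u₁ = miura (-derivationX A) v₂ V₂ := funext₂ hu₁def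
  obtain rfl : u₂ = miura (derivationX A) v₂ V₂ := funext₂ hu₂def
  obtain rfl : U₁ = linearizedMiura (-derivationX A) v₂ V Vt := funext₂ hU₁def
  obtain rfl : U₂ = linearizedMiura (derivationX A) v₂ V Vt := funext₂ hU₂def
  have h := linearizedKP_miura_neg_eq_of_linearizedBacklund_eq_zero
    (DX := derivationX A) (DY := derivationY A) b₁ b₂
    derivationX_derivationY_comm (Subtype.ext (funext₂ hV₂x)) (Subtype.ext (funext₂ hVtx))
    (Subtype.ext (funext₂ hU₁tx)) (Subtype.ext (funext₂ hMt₁))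
  -- On `smoothFunctions A` both operators unfold to the pointwise expressions in `pX` and `pY`.
  exact congrFun₂ (congrArg Subtype.val h) X Y

/-- the linearized Miura transformations map solutions of the
zero-eigenvalue equation of the linearized KP-II operator around u₂ to
solutions of the corresponding equation around u₁. -/
theorem linearized_miura_zero_eigenvalue
    (b₁ b₂ : ℝ)
    (v₂ V₂ u₁ u₂ V Vt U₁ U₁t U₂ U₂t : ℝ → ℝ → ℂ)
    (hv₂ : ContDiff ℝ (⊤ : ℕ∞) fun p : ℝ × ℝ => v₂ p.1 p.2)
    (hV₂ : ContDiff ℝ (⊤ : ℕ∞) fun p : ℝ × ℝ => V₂ p.1 p.2)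
    (hu₁ : ContDiff ℝ (⊤ : ℕ∞) fun p : ℝ × ℝ => u₁ p.1 p.2)
    (hu₂ : ContDiff ℝ (⊤ : ℕ∞) fun p : ℝ × ℝ => u₂ p.1 p.2)
    (hV : ContDiff ℝ (⊤ : ℕ∞) fun p : ℝ × ℝ => V p.1 p.2)
    (hVt : ContDiff ℝ (⊤ : ℕ∞) fun p : ℝ × ℝ => Vt p.1 p.2)
    (hU₁ : ContDiff ℝ (⊤ : ℕ∞) fun p : ℝ × ℝ => U₁ p.1 p.2)
    (hU₁t : ContDiff ℝ (⊤ : ℕ∞) fun p : ℝ × ℝ => U₁t p.1 p.2)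
    (hU₂ : ContDiff ℝ (⊤ : ℕ∞) fun p : ℝ × ℝ => U₂ p.1 p.2)
    (hU₂t : ContDiff ℝ (⊤ : ℕ∞) fun p : ℝ × ℝ => U₂t p.1 p.2)
    (hV₂x : ∀ X Y, pX V₂ X Y = pY v₂ X Y)
    (hu₂def : ∀ X Y, u₂ X Y = pX v₂ X Y + V₂ X Y - (v₂ X Y)^2)
    (hu₁def : ∀ X Y, u₁ X Y = -pX v₂ X Y + V₂ X Y - (v₂ X Y)^2)
    (hVtx : ∀ X Y, pX Vt X Y = pY V X Y)
    (hU₁tx : ∀ X Y, pX U₁t X Y = pY U₁ X Y)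
    (hU₂tx : ∀ X Y, pX U₂t X Y = pY U₂ X Y)
    (hU₁def : ∀ X Y, U₁ X Y = -pX V X Y + Vt X Y - 2 * v₂ X Y * V X Y)
    (hU₂def : ∀ X Y, U₂ X Y = pX V X Y + Vt X Y - 2 * v₂ X Y * V X Y)
    (hMt₁ : ∀ X Y,
      3 * (pX U₁ X Y + U₁t X Y + 2 * v₂ X Y * U₁ X Y)
        + 4 * (pX (pX V) X Y + 3 * v₂ X Y * pX V X Y - (b₁ : ℂ) * V X Y
            + 3 * (v₂ X Y)^2 * V X Y + (3/2) * u₂ X Y * V X Y)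
        - 4 * (b₂ : ℂ) * Vt X Y = 0)
    (hMt₂ : ∀ X Y,
      3 * (-pX U₂ X Y + U₂t X Y + 2 * v₂ X Y * U₂ X Y)
        + 4 * (pX (pX V) X Y - 3 * v₂ X Y * pX V X Y - (b₁ : ℂ) * V X Y
            + 3 * (v₂ X Y)^2 * V X Y + (3/2) * u₁ X Y * V X Y)
        - 4 * (b₂ : ℂ) * Vt X Y = 0)
    (hU₂eq : ∀ X Y,
      3 * pY (pY U₂) X Y - 4 * (b₂ : ℂ) * pX (pY U₂) X Y
        + pX (pX fun a b => pX (pX U₂) a b - 4 * (b₁ : ℂ) * U₂ a b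
            + 6 * u₂ a b * U₂ a b) X Y = 0) :
    ∀ X Y,
      3 * pY (pY U₁) X Y - 4 * (b₂ : ℂ) * pX (pY U₁) X Y
        + pX (pX fun a b => pX (pX U₁) a b - 4 * (b₁ : ℂ) * U₁ a b
            + 6 * u₁ a b * U₁ a b) X Y = 0 := by
  intro X Y
  rw [linearized_miura_zero_eigenvalue_general (b₁ : ℂ) b₂ hv₂ hV₂ hV hVt hU₁t hV₂x hu₂def hu₁def
    hVtx hU₁tx hU₁def hU₂def fun X Y => by linear_combination hMt₁ X Y]
  exact hU₂eq X Y
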